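/- Let β = i − 1 and D = {0, 1, −1, i, −i}, and for x ∈ ℤ[i], k ∈ ℕ let r(x, k) be the number of normalized (β, D)-representations of x with exactly k nonzero digits. Then r(1, k+1) = 3^k for every k ∈ ℕ. -/

import Mathlib

/-!
The lowest digit drives a recursion. Nonzero digits are exactly the units of `ℤ[i]`, and no unit is
divisible by `β = i - 1` (`unit_ne_gβ_mul`). Hence a multiple `β v` forces lowest digit `0`, while a
unit `u` forces a nonzero lowest digit `d`, one of the four associates of `u`. Since

* `u = u + β · 0`,
* `u = -u + β · (β · iu)`,
* `u = iu + β · (-u)`,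
* `u = -iu + β · (-iu)`,

a normalized representation of `u` of weight `k + 1` is one of four kinds. The first needs a
representation of `0`, which is empty (`eq_nil_of_mem_zero`), so it occurs only for `k = 0`. Each
of the other three arises from a representation of weight `k` of another unit, the second through
a forced digit `0`. So every unit has one representation of weight `1`, and passing from weight
`k + 1` to `k + 2` triples the count (`reps_one`, `reps_succ`, `reps_card`).
-/

open Matrix

noncomputable section

/-- The imaginary unit `i` in the Gaussian integers. -/
def gI : GaussianInt := ⟨0, 1⟩

/-- The base `β = i - 1`. -/
def gβ : GaussianInt := ⟨-1, 1⟩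

/-- The digit set `D = {0, 1, -1, i, -i}`. -/
def gD : Set GaussianInt := {0, 1, -1, gI, -gI}

/-- Value of a digit string `d_{n-1} ⋯ d_0`, given as a list with the least
significant digit first: `gval [d_0, d_1, …, d_{n-1}] = Σ d_j β^j`. -/
def gval (l : List GaussianInt) : GaussianInt :=
  l.foldr (fun d acc => d + gβ * acc) 0

/-- `l` (least significant digit first) is a `(β, D)`-representation of `x`. -/
def gIsRep (x : GaussianInt) (l : List GaussianInt) : Prop :=
  (∀ d ∈ l, d ∈ gD) ∧ gval l = x

/-- A representation is normalized if it is empty or its leading digit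
(the last entry of the LSD-first list) is nonzero. -/
def gNormalized (l : List GaussianInt) : Prop := l.getLast? ≠ some 0

/-- Number of nonzero digits (Hamming weight). -/
def gweight (l : List GaussianInt) : ℕ := (l.filter (fun d => d ≠ 0)).length

/-- `gr x k` : number of normalized representations of `x` with exactly `k`
nonzero digits. -/
def gr (x : GaussianInt) (k : ℕ) : ℕ :=
  Nat.card {l : List GaussianInt // gIsRep x l ∧ gNormalized l ∧ gweight l = k}

/-- The normalized representations of `x` with exactly `k` nonzero digits. -/
def gReps (x : GaussianInt) (k : ℕ) : Set (List GaussianInt) :=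
  {l | gIsRep x l ∧ gNormalized l ∧ gweight l = k}

/-- The four units of `ℤ[i]`, i.e. the nonzero digits. -/
def gU : Set GaussianInt := {1, -1, gI, -gI}

theorem mem_gD_iff (d : GaussianInt) : d ∈ gD ↔ d = 0 ∨ d ∈ gU := Iff.rfl

theorem gI_mul_gI : gI * gI = -1 := by decide

theorem gβ_eq : gβ = gI - 1 := by decide

theorem gβ_ne_zero : gβ ≠ 0 := by decide

theorem neg_mem_gU {u : GaussianInt} (hu : u ∈ gU) : -u ∈ gU := by
  rcases hu with rfl | rfl | rfl | rfl <;> simp [gU]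

theorem gI_mul_mem_gU {u : GaussianInt} (hu : u ∈ gU) : gI * u ∈ gU := by
  rcases hu with rfl | rfl | rfl | rfl <;> simp [gU, gI_mul_gI]

theorem associates_of_mem_gU {u d : GaussianInt} (hu : u ∈ gU) (hd : d ∈ gU) :
    d = u ∨ d = -u ∨ d = gI * u ∨ d = -(gI * u) := by
  rcases hu with rfl | rfl | rfl | rfl <;> rcases hd with rfl | rfl | rfl | rfl <;> decide

/-- Multiples of `β` have even `re + im`, whereas units have odd `re + im`. -/
theorem unit_ne_gβ_mul {u : GaussianInt} (hu : u ∈ gU) (v : GaussianInt) : u ≠ gβ * v := by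
  intro h
  rw [Zsqrtd.ext_iff] at h
  rcases hu with rfl | rfl | rfl | rfl <;> simp [gβ, gI] at h <;> omega

theorem ne_zero_of_mem_gU {u : GaussianInt} (hu : u ∈ gU) : u ≠ 0 := by
  simpa using unit_ne_gβ_mul hu 0

theorem gI_mul_ne {u : GaussianInt} (hu : u ∈ gU) :
    gI * u ≠ -u ∧ -(gI * u) ≠ -u ∧ -(gI * u) ≠ gI * u := by
  rcases hu with rfl | rfl | rfl | rfl <;> decide

theorem gval_cons (d : GaussianInt) (l : List GaussianInt) : gval (d :: l) = d + gβ * gval l := rfl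

theorem nil_mem_iff (x : GaussianInt) (k : ℕ) : [] ∈ gReps x k ↔ x = 0 ∧ k = 0 := by
  simp [gReps, gIsRep, gNormalized, gweight, gval, eq_comm]

theorem unit_cons_mem_iff {d : GaussianInt} (hd : d ∈ gU) (v : GaussianInt) (l : List GaussianInt)
    (k : ℕ) : d :: l ∈ gReps (d + gβ * v) (k + 1) ↔ l ∈ gReps v k := by
  have hd0 := ne_zero_of_mem_gU hd
  have hn : gNormalized (d :: l) ↔ gNormalized l := by
    cases l <;> simp [gNormalized, hd0]
  have hD : d ∈ gD := Or.inr hd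
  simp [gReps, hn, gIsRep, gval_cons, gβ_ne_zero, gweight, hd0, hD]

theorem zero_cons_mem_iff {v : GaussianInt} (hv : v ≠ 0) (l : List GaussianInt)
    (k : ℕ) : 0 :: l ∈ gReps (gβ * v) k ↔ l ∈ gReps v k := by
  have hD : (0 : GaussianInt) ∈ gD := Or.inl rfl
  cases l with
  | nil => simp [gReps, gIsRep, gval, gNormalized, hv.symm]
  | cons a l =>
    simp [gReps, gNormalized, gIsRep, gval_cons (0 : GaussianInt), gβ_ne_zero, gweight, hD]

/-- A string whose value is divisible by `β` has lowest digit `0`. -/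
theorem head_eq_zero {d v : GaussianInt} {l : List GaussianInt} {k : ℕ}
    (h : d :: l ∈ gReps (gβ * v) k) : d = 0 := by
  obtain ⟨⟨hD, hval⟩, -⟩ := h
  refine ((mem_gD_iff d).1 (hD d (by simp))).resolve_right fun hu => ?_
  rw [gval_cons] at hval
  exact unit_ne_gβ_mul hu (v - gval l) (by linear_combination hval)

theorem eq_nil_of_mem_zero {l : List GaussianInt} {k : ℕ} (h : l ∈ gReps 0 k) : l = [] := by
  induction l with
  | nil => rfl
  | cons d l ih =>
    have hd : d = 0 := head_eq_zero (v := 0) (by simpa using h)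
    subst hd
    obtain ⟨⟨hD, hval⟩, hn, hw⟩ := h
    have hl : l ≠ [] := by
      rintro rfl
      exact hn rfl
    refine absurd (ih ⟨⟨fun d hd => hD d (by simp [hd]), ?_⟩, ?_, ?_⟩) hl
    · simpa [gval_cons, gβ_ne_zero] using hval
    · obtain ⟨a, l, rfl⟩ := List.exists_cons_of_ne_nil hl
      simpa [gNormalized] using hn
    · simpa [gweight] using hw

/-- The four kinds of representations of a unit, according to the lowest digit. -/
theorem unit_mem_cases {u : GaussianInt} (hu : u ∈ gU) {l : List GaussianInt} {k : ℕ}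
    (h : l ∈ gReps u (k + 1)) :
    (k = 0 ∧ l = [u]) ∨ (∃ t ∈ gReps (gI * u) k, l = -u :: 0 :: t) ∨
      (∃ t ∈ gReps (-u) k, l = gI * u :: t) ∨
      (∃ t ∈ gReps (-(gI * u)) k, l = -(gI * u) :: t) := by
  have hII := gI_mul_gI
  have hβ := gβ_eq
  cases l with
  | nil => simp [nil_mem_iff] at h
  | cons d t =>
    have hd : d ∈ gU := by
      refine ((mem_gD_iff d).1 (h.1.1 d (by simp))).resolve_left fun hd => ?_
      have hval := h.1.2
      rw [gval_cons, hd, zero_add] at hval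
      exact unit_ne_gβ_mul hu _ hval.symm
    rcases associates_of_mem_gU hu hd with rfl | rfl | rfl | rfl
    · have ht : t ∈ gReps 0 k := (unit_cons_mem_iff hd 0 t k).1 (by simpa using h)
      obtain rfl := eq_nil_of_mem_zero ht
      exact Or.inl ⟨((nil_mem_iff _ _).1 ht).2, rfl⟩
    · have e : u = -u + gβ * (gβ * (gI * u)) := by
        rw [hβ]; linear_combination (-gI * u + 2 * u) * hII
      have ht : t ∈ gReps (gβ * (gI * u)) k := (unit_cons_mem_iff hd _ t k).1 (e ▸ h)
      have h0 := ne_zero_of_mem_gU (gI_mul_mem_gU hu)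
      cases t with
      | nil => exact absurd ((nil_mem_iff _ _).1 ht).1 (mul_ne_zero gβ_ne_zero h0)
      | cons d' t =>
        obtain rfl := head_eq_zero ht
        exact Or.inr (Or.inl ⟨t, (zero_cons_mem_iff h0 t k).1 ht, rfl⟩)
    · have e : u = gI * u + gβ * (-u) := by rw [hβ]; ring
      exact Or.inr (Or.inr (Or.inl ⟨t, (unit_cons_mem_iff hd _ t k).1 (e ▸ h), rfl⟩))
    · have e : u = -(gI * u) + gβ * (-(gI * u)) := by
        rw [hβ]; linear_combination u * hII
      exact Or.inr (Or.inr (Or.inr ⟨t, (unit_cons_mem_iff hd _ t k).1 (e ▸ h), rfl⟩))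

theorem reps_one {u : GaussianInt} (hu : u ∈ gU) : gReps u 1 = {[u]} := by
  -- A representation of weight `0` of a unit would have value `0`.
  have key : ∀ v ∈ gU, ∀ t, t ∉ gReps v 0 := by
    rintro v hv t ⟨⟨-, hval⟩, -, hw⟩
    cases t with
    | nil => exact ne_zero_of_mem_gU hv hval.symm
    | cons d t =>
      have hd : d = 0 := by
        by_contra hd
        simp [gweight, hd] at hw
      rw [gval_cons, hd, zero_add] at hval
      exact unit_ne_gβ_mul hv _ hval.symm
  ext l
  constructor
  · intro h
    rcases unit_mem_cases hu h with ⟨-, rfl⟩ | ⟨t, ht, -⟩ | ⟨t, ht, -⟩ | ⟨t, ht, -⟩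
    · rfl
    · exact absurd ht (key _ (gI_mul_mem_gU hu) t)
    · exact absurd ht (key _ (neg_mem_gU hu) t)
    · exact absurd ht (key _ (neg_mem_gU (gI_mul_mem_gU hu)) t)
  · rintro rfl
    simpa using (unit_cons_mem_iff hu 0 [] 0).2 ((nil_mem_iff _ _).2 ⟨rfl, rfl⟩)

theorem reps_succ {u : GaussianInt} (hu : u ∈ gU) (k : ℕ) :
    gReps u (k + 2) = (fun t => -u :: 0 :: t) '' gReps (gI * u) (k + 1) ∪
      (List.cons (gI * u) '' gReps (-u) (k + 1) ∪
        List.cons (-(gI * u)) '' gReps (-(gI * u)) (k + 1)) := by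
  have hII := gI_mul_gI
  have hβ := gβ_eq
  have hIu := gI_mul_mem_gU hu
  ext l
  constructor
  · intro h
    rcases unit_mem_cases hu h with ⟨h0, -⟩ | ⟨t, ht, rfl⟩ | ⟨t, ht, rfl⟩ | ⟨t, ht, rfl⟩
    · omega
    · exact Or.inl ⟨t, ht, rfl⟩
    · exact Or.inr (Or.inl ⟨t, ht, rfl⟩)
    · exact Or.inr (Or.inr ⟨t, ht, rfl⟩)
  · rintro (⟨t, ht, rfl⟩ | ⟨t, ht, rfl⟩ | ⟨t, ht, rfl⟩)
    · have e : -u + gβ * (gβ * (gI * u)) = u := by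
        rw [hβ]; linear_combination (gI * u - 2 * u) * hII
      have h := (unit_cons_mem_iff (neg_mem_gU hu) _ _ _).2
        ((zero_cons_mem_iff (ne_zero_of_mem_gU hIu) t _).2 ht)
      rwa [e] at h
    · have e : gI * u + gβ * (-u) = u := by rw [hβ]; ring
      have h := (unit_cons_mem_iff hIu _ _ _).2 ht
      rwa [e] at h
    · have e : -(gI * u) + gβ * (-(gI * u)) = u := by
        rw [hβ]; linear_combination -u * hII
      have h := (unit_cons_mem_iff (neg_mem_gU hIu) _ _ _).2 ht
      rwa [e] at h

theorem reps_card (k : ℕ) : ∀ u ∈ gU, (gReps u (k + 1)).Finite ∧ (gReps u (k + 1)).ncard = 3 ^ k := by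
  induction k with
  | zero =>
    intro u hu
    simp [reps_one hu]
  | succ k ih =>
    intro u hu
    have hIu := gI_mul_mem_gU hu
    obtain ⟨f1, c1⟩ := ih _ hIu
    obtain ⟨f2, c2⟩ := ih _ (neg_mem_gU hu)
    obtain ⟨f3, c3⟩ := ih _ (neg_mem_gU hIu)
    obtain ⟨n1, n2, n3⟩ := gI_mul_ne hu
    have g1 := f1.image (fun t => -u :: 0 :: t)
    have g2 := f2.image (List.cons (gI * u))
    have g3 := f3.image (List.cons (-(gI * u)))
    rw [reps_succ hu]
    refine ⟨g1.union (g2.union g3), ?_⟩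
    rw [Set.ncard_union_eq _ g1 (g2.union g3), Set.ncard_union_eq _ g2 g3,
      Set.ncard_image_of_injective _ List.cons_injective,
      Set.ncard_image_of_injective _ List.cons_injective,
      Set.ncard_image_of_injective _ (fun a b h => by simpa using h), c1, c2, c3]
    · ring
    · rw [Set.disjoint_left]
      rintro _ ⟨t, -, rfl⟩ ⟨s, -, h⟩
      exact n3 (List.cons.inj h).1
    · rw [Set.disjoint_left]
      rintro _ ⟨t, -, rfl⟩ (⟨s, -, h⟩ | ⟨s, -, h⟩)
      · exact n1 (List.cons.inj h).1
      · exact n2 (List.cons.inj h).1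

/-- `r(1, k+1) = 3^k` for every `k ∈ ℕ`. -/
theorem stmt4 (k : ℕ) : gr 1 (k + 1) = 3 ^ k := by
  exact (reps_card k 1 (Or.inl rfl)).2
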